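/- Let F : [0,∞) → ℝ and let d be a positive integer. Then F[A] is totally non-negative for every symmetric totally non-negative d × d matrix A if and only if F is a non-negative constant, or: (a) d = 1: F(x) ≥ 0 for all x ≥ 0; (b) d = 2: F is non-negative, non-decreasing, and multiplicatively mid-convex, i.e., F(√(xy))² ≤ F(x)F(y) for all x, y ∈ [0,∞); (c) d = 3: F(x) = c·x^α for some c > 0 and some α ≥ 1; (d) d = 4: F(x) = c·x^α for some c > 0 and some α ∈ {1} ∪ [2,∞); (e) d ≥ 5: F(x) = c·x for some c > 0. The same characterization holds for functions F such that K ↦ F∘K maps symmetric TN kernels on X × X to symmetric TN kernels, where X is a totally ordered set of cardinality d (which may be infinite). -/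

import Mathlib

/-- An `m × n` real matrix is totally non-negative if all of its minors are
non-negative. -/
def IsTNMat {m n : ℕ} (A : Matrix (Fin m) (Fin n) ℝ) : Prop :=
  ∀ (k : ℕ) (r : Fin k → Fin m) (c : Fin k → Fin n),
    StrictMono r → StrictMono c → 0 ≤ (A.submatrix r c).det

/-- A kernel on linearly ordered sets is totally non-negative if all matrices
obtained by evaluating it on increasing tuples have non-negative determinant. -/
def IsTNKernel {X Y : Type*} [LinearOrder X] [LinearOrder Y] (K : X → Y → ℝ) : Prop :=
  ∀ (n : ℕ) (x : Fin n → X) (y : Fin n → Y), StrictMono x → StrictMono y →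
    0 ≤ (Matrix.of fun i j : Fin n => K (x i) (y j)).det

/-- The dichotomy of Theorem (symmetric TN preservers), according to `d`. -/
def SymmTNCond (F : ℝ → ℝ) (d : ℕ) : Prop :=
  (∃ c : ℝ, 0 ≤ c ∧ ∀ x : ℝ, 0 ≤ x → F x = c) ∨
  (d = 1 ∧ ∀ x : ℝ, 0 ≤ x → 0 ≤ F x) ∨
  (d = 2 ∧ (∀ x : ℝ, 0 ≤ x → 0 ≤ F x) ∧ MonotoneOn F (Set.Ici 0) ∧
    ∀ x y : ℝ, 0 ≤ x → 0 ≤ y → F (Real.sqrt (x * y)) ^ 2 ≤ F x * F y) ∨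
  (d = 3 ∧ ∃ c : ℝ, 0 < c ∧ ∃ α : ℝ, 1 ≤ α ∧ ∀ x : ℝ, 0 ≤ x → F x = c * x ^ α) ∨
  (d = 4 ∧ ∃ c : ℝ, 0 < c ∧ ∃ α : ℝ, (α = 1 ∨ 2 ≤ α) ∧
    ∀ x : ℝ, 0 ≤ x → F x = c * x ^ α) ∨
  (5 ≤ d ∧ ∃ c : ℝ, 0 < c ∧ ∀ x : ℝ, 0 ≤ x → F x = c * x)

/-!
The sign of a minor limits the admissible functions one dimension at a time. A `2 × 2` matrix only
asks for the determinant inequality, which gives (a) and (b). In dimension three, the minors of the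
rank-one matrices with rows `(p, 1, r)` and `(1, p, r)` combine to `F 1 * F (p * r) = F p * F r`, so
a monotone `F` is constant or a power, and the matrix `(1, 1, 0; 1, 2, 1; 0, 1, 1)` forces the
exponent to be at least `1`. In dimensions four and five, one perturbs the all-ones matrix: the
powers of `1 + i j e` stop being positive semidefinite as `e → 0` when the exponent lies in
`(1, 2)`, and in dimension five a non-principal minor of a Gram matrix perturbation becomes negative
for every exponent above `1`.

Conversely, powers `α ≥ 1` preserve non-negative `3 × 3` determinants because the positive and
negative terms of the Leibniz formula have equal products and the `2 × 2` minors order them, while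
a symmetric totally non-negative `4 × 4` matrix is positive semidefinite, hence so is its entrywise
power for `α ≥ 2` by FitzGerald and Horn.
-/

section PosSemidef

open Matrix

theorem posSemidef_sq_le_mul_diag {ι : Type*} {A : Matrix ι ι ℝ} (hA : A.PosSemidef) (i j : ι) :
    A i j ^ 2 ≤ A i i * A j j := by
  have hminor := (hA.submatrix ![i, j]).det_nonneg
  have hsymm : A j i = A i j := by simpa using hA.isHermitian.apply i j
  simp only [det_fin_two, submatrix_apply, cons_val_zero, cons_val_one, hsymm] at hminor
  nlinarith

variable {ι : Type*} [Finite ι]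

-- The coefficients of `det (t + A)` are sums of principal minors, so it has no positive root.
theorem posSemidef_of_principal_minors_nonneg [DecidableEq ι] {A : Matrix ι ι ℝ}
    (hA : A.IsHermitian)
    (hminors : ∀ s : Finset ι, 0 ≤ (A.submatrix ((↑) : s → ι) ((↑) : s → ι)).det) :
    A.PosSemidef := by
  have := Fintype.ofFinite ι
  have hcoeff (i : ℕ) (hi : i ≤ Fintype.card ι) : 0 ≤ (-A).charpoly.coeff i := by
    rw [← Nat.sub_sub_self hi, charpoly_coeff_eq_sum_minors _ _ (Nat.sub_le _ _),
      Finset.mul_sum]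
    refine Finset.sum_nonneg fun s hs => ?_
    rw [submatrix_neg, Pi.neg_apply, Pi.neg_apply, det_neg, Fintype.card_coe,
      (Finset.mem_powersetCard.1 hs).2, ← mul_assoc, ← mul_pow]
    simpa using hminors s
  rw [hA.posSemidef_iff_eigenvalues_nonneg]
  intro i
  by_contra! hneg
  have hpos : 0 < -hA.eigenvalues i := neg_pos.2 hneg
  have hroot : (-A).charpoly.IsRoot (-hA.eigenvalues i) := by
    rw [← mem_spectrum_iff_isRoot_charpoly, ← spectrum.neg_eq, Set.neg_mem_neg]
    exact hA.eigenvalues_mem_spectrum_real i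
  have hlead : (-A).charpoly.coeff (Fintype.card ι) = 1 := by
    simpa [charpoly_natDegree_eq_dim] using (charpoly_monic (-A)).coeff_natDegree
  refine hroot.eq_zero.not_gt ?_
  rw [Polynomial.eval_eq_sum_range, charpoly_natDegree_eq_dim]
  refine Finset.sum_pos' (fun k hk => ?_) ⟨Fintype.card ι, by simp, by simp [hlead, pow_pos hpos]⟩
  exact mul_nonneg (hcoeff k (Finset.mem_range_succ_iff.1 hk)) (pow_nonneg hpos.le k)

theorem posSemidef_schurComplement {A : Matrix ι ι ℝ} (hA : A.PosSemidef) (p : ι) :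
    (A - of fun i j => A p i * A p j / A p p).PosSemidef := by
  classical
  have := Fintype.ofFinite ι
  rcases eq_or_ne (A p p) 0 with hp | hp
  · convert hA using 1
    ext i j
    simp [hp]
  have hsymm (i j : ι) : A i j = A j i := by simpa using hA.isHermitian.apply j i
  set P : Matrix ι ι ℝ := 1 - of fun i j => A p i / A p p * (1 : Matrix ι ι ℝ) p j
  convert hA.mul_mul_conjTranspose_same P using 1
  have hPA : P * A = A - of fun i j => A p i * A p j / A p p := by
    ext i j
    simp only [P, sub_mul, ite_mul, mul_ite, one_mul, zero_mul, mul_one, mul_zero, mul_apply,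
      one_apply, of_apply, Matrix.sub_apply, Finset.sum_sub_distrib, Finset.sum_ite_eq,
      Finset.mem_univ, ↓reduceIte]
    ring
  rw [hPA]
  ext i j
  have hcancel : A p i * A p p / A p p = A p i := mul_div_cancel_right₀ _ hp
  simp [P, mul_sub, mul_apply, one_apply, hsymm i p, hcancel]

theorem posSemidef_of_submatrix_succ {n : ℕ} {A : Matrix (Fin (n + 1)) (Fin (n + 1)) ℝ}
    (hrow : ∀ j, A 0 j = 0) (hcol : ∀ i, A i 0 = 0)
    (hA : (A.submatrix Fin.succ Fin.succ).PosSemidef) : A.PosSemidef := by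
  rw [posSemidef_iff_dotProduct_mulVec] at hA ⊢
  refine ⟨?_, fun v => ?_⟩
  · ext i j
    cases i using Fin.cases <;> cases j using Fin.cases <;>
      simp only [conjTranspose_apply, hrow, hcol, star_trivial]
    simpa using hA.1.apply _ _
  · simpa [dotProduct, mulVec, Fin.sum_univ_succ, hrow, hcol] using hA.2 (v ∘ Fin.succ)

theorem posSemidef_sub_of_hasDerivAt {M M' : ℝ → Matrix ι ι ℝ} {a b : ℝ} (hab : a ≤ b)
    (hM : ∀ t, (M t).IsHermitian) (hderiv : ∀ t i j, HasDerivAt (M · i j) (M' t i j) t)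
    (hM' : ∀ t ∈ Set.Ioo a b, (M' t).PosSemidef) : (M b - M a).PosSemidef := by
  have := Fintype.ofFinite ι
  rw [posSemidef_iff_dotProduct_mulVec]
  refine ⟨(hM b).sub (hM a), fun v => ?_⟩
  have hform (t : ℝ) : HasDerivAt (fun t => star v ⬝ᵥ M t *ᵥ v) (star v ⬝ᵥ M' t *ᵥ v) t := by
    simp only [dotProduct, mulVec]
    exact HasDerivAt.fun_sum fun i _ => .const_mul _ <| .fun_sum fun j _ =>
      (hderiv t i j).mul_const _
  have hmono : MonotoneOn (fun t => star v ⬝ᵥ M t *ᵥ v) (Set.Icc a b) := by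
    refine monotoneOn_of_hasDerivWithinAt_nonneg (convex_Icc a b)
      (fun t _ => (hform t).continuousAt.continuousWithinAt)
      (fun t _ => (hform t).hasDerivWithinAt) fun t ht => ?_
    rw [interior_Icc] at ht
    exact (hM' t ht).dotProduct_mulVec_nonneg v
  simpa [sub_mulVec] using
    hmono (Set.left_mem_Icc.2 hab) (Set.right_mem_Icc.2 hab) hab

theorem posSemidef_rankOne (w : ι → ℝ) {c : ℝ} (hc : 0 ≤ c) :
    (of fun i j => w i * w j / c).PosSemidef := by
  convert (posSemidef_vecMulVec_self_star w).smul (inv_nonneg.2 hc) using 1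
  ext i j
  simp [vecMulVec_apply, div_eq_inv_mul]

theorem posSemidef_fin_two {A : Matrix (Fin 2) (Fin 2) ℝ} (hA : A.IsHermitian)
    (h00 : 0 ≤ A 0 0) (h11 : 0 ≤ A 1 1) (hdet : 0 ≤ A.det) : A.PosSemidef := by
  have hsymm : A 1 0 = A 0 1 := by simpa using hA.apply 0 1
  rw [det_fin_two, hsymm] at hdet
  refine posSemidef_iff_dotProduct_mulVec.2 ⟨hA, fun v => ?_⟩
  simp only [star_trivial, dotProduct, mulVec, Fin.sum_univ_two, hsymm]
  rcases h00.eq_or_lt with h0 | h0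
  · have h01 : A 0 1 = 0 := by
      rw [← h0] at hdet
      exact pow_eq_zero_iff two_ne_zero |>.1 (by nlinarith)
    rw [← h0, h01]
    nlinarith [mul_nonneg h11 (sq_nonneg (v 1))]
  · refine nonneg_of_mul_nonneg_right ?_ h0
    nlinarith [sq_nonneg (A 0 0 * v 0 + A 0 1 * v 1), mul_nonneg hdet (sq_nonneg (v 1))]

theorem posSemidef_fin_two_map_rpow {A : Matrix (Fin 2) (Fin 2) ℝ} (hA : A.PosSemidef)
    (hnonneg : ∀ i j, 0 ≤ A i j) {α : ℝ} (hα : 0 ≤ α) : (A.map (· ^ α)).PosSemidef := by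
  have hpow (i j : Fin 2) : 0 ≤ A i j ^ α := Real.rpow_nonneg (hnonneg i j) α
  refine posSemidef_fin_two (hA.isHermitian.map _ fun _ => rfl) (hpow 0 0) (hpow 1 1) ?_
  have hminor : A 0 1 * A 1 0 ≤ A 0 0 * A 1 1 := by
    simpa [det_fin_two] using hA.det_nonneg
  simpa [det_fin_two, ← Real.mul_rpow (hnonneg _ _) (hnonneg _ _)] using
    Real.rpow_le_rpow (mul_nonneg (hnonneg _ _) (hnonneg _ _)) hminor hα

theorem posSemidef_rankOne_map_rpow (w : ι → ℝ) {c : ℝ} (hw : ∀ i, 0 ≤ w i) (hc : 0 ≤ c) (α : ℝ) :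
    ((of fun i j => w i * w j / c).map (· ^ α)).PosSemidef := by
  convert posSemidef_rankOne (fun i => w i ^ α) (Real.rpow_nonneg hc α) using 1
  ext i j
  simp [Real.div_rpow (mul_nonneg (hw i) (hw j)) hc, Real.mul_rpow (hw i) (hw j)]

-- Integrate the derivative `α (A - B) ⊙ (B + t (A - B))^(α - 1)` along the segment from `B` to `A`.
theorem posSemidef_map_rpow_sub_map_rpow {A B : Matrix ι ι ℝ} {α : ℝ} (hα : 1 ≤ α)
    (hA : A.IsHermitian) (hB : B.IsHermitian)
    (h : ∀ t ∈ Set.Ioo (0 : ℝ) 1,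
      ((A - B) ⊙ (B + t • (A - B)).map (· ^ (α - 1))).PosSemidef) :
    (A.map (· ^ α) - B.map (· ^ α)).PosSemidef := by
  have hderiv (t : ℝ) (i j : ι) : HasDerivAt (fun t : ℝ => (B + t • (A - B)).map (· ^ α) i j)
      ((α • (A - B) ⊙ (B + t • (A - B)).map (· ^ (α - 1)) : Matrix ι ι ℝ) i j) t := by
    have hline : HasDerivAt (fun t => B i j + t * (A - B) i j) ((A - B) i j) t := by
      simpa using ((hasDerivAt_id t).mul_const ((A - B) i j)).const_add (B i j)
    refine (hline.rpow_const (.inr hα)).congr_deriv ?_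
    simp only [Matrix.smul_apply, hadamard_apply, map_apply, Matrix.add_apply, smul_eq_mul]
    ring
  simpa using posSemidef_sub_of_hasDerivAt zero_le_one
    (fun t => (hB.add ((hA.sub hB).smul (.all t))).map (· ^ α) fun _ => rfl) hderiv
    fun t ht => (h t ht).smul (zero_le_one.trans hα)

-- FitzGerald-Horn: compare `A` with the rank-one matrix `B` that has the same first row and column.
theorem posSemidef_map_rpow (n : ℕ) {A : Matrix (Fin (n + 2)) (Fin (n + 2)) ℝ}
    (hA : A.PosSemidef) (hnonneg : ∀ i j, 0 ≤ A i j) {α : ℝ} (hα : n ≤ α) :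
    (A.map (· ^ α)).PosSemidef := by
  induction n generalizing α with
  | zero => exact posSemidef_fin_two_map_rpow hA hnonneg (by simpa using hα)
  | succ n ih =>
    push_cast at hα
    have hα1 : 1 ≤ α := by linarith [n.cast_nonneg (α := ℝ)]
    set B : Matrix (Fin (n + 3)) (Fin (n + 3)) ℝ := of fun i j => A 0 i * A 0 j / A 0 0
    have hB : B.PosSemidef := posSemidef_rankOne (A 0) (hnonneg 0 0)
    have hBnonneg (i j) : 0 ≤ B i j :=
      div_nonneg (mul_nonneg (hnonneg 0 i) (hnonneg 0 j)) (hnonneg 0 0)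
    have hAB : (A - B).PosSemidef := posSemidef_schurComplement hA 0
    have hrow (j) : (A - B) 0 j = 0 := by
      have hdiag : (A - B) 0 0 = 0 := by simp [B, mul_self_div_self]
      exact pow_eq_zero_iff two_ne_zero |>.1 <| le_antisymm
        (by simpa [hdiag] using posSemidef_sq_le_mul_diag hAB 0 j) (sq_nonneg _)
    have hcol (i) : (A - B) i 0 = 0 := by
      rw [← hrow i]
      simpa using hAB.isHermitian.apply 0 i
    have hsub : (A.map (· ^ α) - B.map (· ^ α)).PosSemidef := by
      refine posSemidef_map_rpow_sub_map_rpow hα1 hA.isHermitian hB.isHermitian fun t ht => ?_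
      refine posSemidef_of_submatrix_succ (by simp [hrow]) (by simp [hcol]) ?_
      have hsegment (i j) : 0 ≤ (B + t • (A - B)) i j := by
        have := add_nonneg (mul_nonneg (sub_nonneg.2 ht.2.le) (hBnonneg i j))
          (mul_nonneg ht.1.le (hnonneg i j))
        simp only [Matrix.add_apply, Matrix.smul_apply, Matrix.sub_apply, smul_eq_mul]
        linarith
      exact (hAB.submatrix Fin.succ).hadamard <| ih (A := (B + t • (A - B)).submatrix _ _)
        ((hB.add (hAB.smul ht.1.le)).submatrix Fin.succ) (fun _ _ => hsegment _ _)
        (le_sub_iff_add_le.2 hα)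
    have hBpow : (B.map (· ^ α)).PosSemidef :=
      posSemidef_rankOne_map_rpow (A 0) (hnonneg 0) (hnonneg 0 0) α
    simpa only [sub_add_cancel] using hsub.add hBpow

end PosSemidef

section PowerInequalities

variable {α : ℝ}

theorem convexOn_add_le_add {S : Set ℝ} {f : ℝ → ℝ} (hf : ConvexOn ℝ S f) {p q r s : ℝ}
    (hp : p ∈ S) (hs : s ∈ S) (hsq : s ≤ q) (hqp : q ≤ p) (hsum : q + r = p + s) :
    f q + f r ≤ f p + f s := by
  rcases (hsq.trans hqp).eq_or_lt with rfl | hsp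
  · obtain rfl : q = s := le_antisymm hqp hsq
    obtain rfl : r = q := by linarith
    rfl
  have hsp' : 0 < p - s := sub_pos.2 hsp
  have hu : 0 ≤ (p - q) / (p - s) := div_nonneg (by linarith) hsp'.le
  have hv : 0 ≤ (q - s) / (p - s) := div_nonneg (by linarith) hsp'.le
  have huv : (p - q) / (p - s) + (q - s) / (p - s) = 1 := by field_simp; ring
  have hq : (p - q) / (p - s) * s + (q - s) / (p - s) * p = q := by field_simp; ring
  have hr : (q - s) / (p - s) * s + (p - q) / (p - s) * p = r := by
    obtain rfl : r = p + s - q := by linarith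
    field_simp
    ring
  have hfq := hf.2 hs hp hu hv huv
  have hfr := hf.2 hs hp hv hu (by rw [add_comm, huv])
  simp only [smul_eq_mul, hq, hr] at hfq hfr
  linear_combination hfq + hfr + (f p + f s) * huv

theorem convexOn_monotoneOn_add_le_add {S : Set ℝ} {f : ℝ → ℝ} (hf : ConvexOn ℝ S f)
    (hmono : MonotoneOn f S) {p q r s : ℝ} (hp : p ∈ S) (hs : s ∈ S) (hsq : s ≤ q) (hsr : s ≤ r)
    (hsum : q + r ≤ p + s) : f q + f r ≤ f p + f s := by
  have hmem : q + r - s ∈ S := hf.1.ordConnected.out hs hp ⟨by linarith, by linarith⟩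
  have hequal := convexOn_add_le_add hf hmem hs hsq (by linarith : q ≤ q + r - s)
    (r := r) (by ring)
  linarith [hmono hmem hp (by linarith)]

theorem rpow_ratio_mono (hα : 1 ≤ α) {x y : ℝ} (hx : 1 < x) (hxy : x ≤ y) :
    (x - 1) * x ^ (α - 1) / (x ^ α - 1) ≤ (y - 1) * y ^ (α - 1) / (y ^ α - 1) := by
  have hslope {z : ℝ} (hz : 1 < z) :
      (z - 1) * z ^ (α - 1) / (z ^ α - 1) = ((z⁻¹ ^ α - 1 ^ α) / (z⁻¹ - 1))⁻¹ := by
    have hz0 : 0 < z := one_pos.trans hz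
    have hpow : z ^ (α - 1) = z ^ α / z := Real.rpow_sub_one hz0.ne' α
    have hzα : 1 < z ^ α := Real.one_lt_rpow hz (by linarith)
    have hbase : 1 - z ≠ 0 := by linarith
    have hdenom : z ^ α - 1 ≠ 0 := by linarith
    have hdenom' : 1 - z ^ α ≠ 0 := by linarith
    rw [Real.inv_rpow hz0.le, Real.one_rpow, hpow]
    field_simp [hbase]
    ring
  have hy : 1 < y := hx.trans_le hxy
  rw [hslope hx, hslope hy]
  have hx' : x⁻¹ < 1 := inv_lt_one_of_one_lt₀ hx
  have hy' : y⁻¹ < 1 := inv_lt_one_of_one_lt₀ hy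
  have hsecant := (convexOn_rpow hα).secant_mono (a := 1) (by simp)
    (inv_nonneg.2 (by linarith : 0 ≤ y)) (inv_nonneg.2 (by linarith : 0 ≤ x)) hy'.ne hx'.ne
    (inv_anti₀ (by linarith) hxy)
  refine inv_anti₀ (div_pos_of_neg_of_neg (sub_neg.2 ?_) (sub_neg.2 hy')) hsecant
  rw [Real.one_rpow]
  exact Real.rpow_lt_one (inv_nonneg.2 (by linarith)) hy' (by linarith)

theorem convexOn_log_one_add_exp_rpow_sub_one (hα : 1 ≤ α) :
    ConvexOn ℝ Set.univ fun s => Real.log ((1 + Real.exp s) ^ α - 1) := by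
  have hgt (s : ℝ) : 1 < 1 + Real.exp s := by linarith [Real.exp_pos s]
  have hpos (s : ℝ) : 0 < (1 + Real.exp s) ^ α - 1 :=
    sub_pos.2 (Real.one_lt_rpow (hgt s) (by linarith))
  have hderiv (s : ℝ) := ((((Real.hasDerivAt_exp s).const_add 1).rpow_const (.inr hα)).sub_const
    1).log (hpos s).ne'
  refine Monotone.convexOn_univ_of_deriv (fun s => (hderiv s).differentiableAt) fun s t hst => ?_
  rw [(hderiv s).deriv, (hderiv t).deriv]
  have hratio := rpow_ratio_mono hα (hgt s) (add_le_add_right (Real.exp_le_exp.2 hst) 1)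
  simp only [add_sub_cancel_left] at hratio
  convert mul_le_mul_of_nonneg_left hratio (zero_le_one.trans hα) using 1 <;> ring

theorem rpow_sub_one_mul_le (hα : 1 ≤ α) {a b c d : ℝ} (ha : 1 ≤ a) (hab : a ≤ b) (hac : a ≤ c)
    (h : (b - 1) * (c - 1) ≤ (a - 1) * (d - 1)) :
    (b ^ α - 1) * (c ^ α - 1) ≤ (a ^ α - 1) * (d ^ α - 1) := by
  rcases ha.eq_or_lt with rfl | ha
  · have hbc : (b - 1) * (c - 1) = 0 :=
      le_antisymm (by simpa using h) (mul_nonneg (by linarith) (by linarith))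
    rcases mul_eq_zero.1 hbc with hzero | hzero <;> simp [sub_eq_zero.1 hzero]
  set f : ℝ → ℝ := fun s => Real.log ((1 + Real.exp s) ^ α - 1)
  have hexp {z : ℝ} (hz : 1 < z) : Real.exp (f (Real.log (z - 1))) = z ^ α - 1 := by
    simp only [f]
    rw [Real.exp_log (x := z - 1) (by linarith), add_sub_cancel,
      Real.exp_log (sub_pos.2 (Real.one_lt_rpow hz (by linarith)))]
  have hmono : MonotoneOn f Set.univ := fun s _ t _ hst => by
    refine Real.log_le_log (sub_pos.2 (Real.one_lt_rpow ?_ (by linarith))) ?_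
    · linarith [Real.exp_pos s]
    · gcongr
  have hb : 1 < b := ha.trans_le hab
  have hc : 1 < c := ha.trans_le hac
  have hd : 1 < d := sub_pos.1 <| pos_of_mul_pos_right
    ((mul_pos (sub_pos.2 hb) (sub_pos.2 hc)).trans_le h) (sub_pos.2 ha).le
  have hsum : Real.log (b - 1) + Real.log (c - 1) ≤ Real.log (d - 1) + Real.log (a - 1) := by
    rw [← Real.log_mul (by linarith) (by linarith), ← Real.log_mul (by linarith) (by linarith),
      mul_comm (d - 1)]
    exact Real.log_le_log (mul_pos (by linarith) (by linarith)) h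
  have := Real.exp_le_exp.2 <| convexOn_monotoneOn_add_le_add
    (convexOn_log_one_add_exp_rpow_sub_one hα) hmono trivial trivial
    (Real.log_le_log (by linarith) (by linarith)) (Real.log_le_log (by linarith) (by linarith)) hsum
  rwa [Real.exp_add, Real.exp_add, hexp ha, hexp hb, hexp hc, hexp hd, mul_comm (d ^ α - 1)] at this

theorem rpow_three_terms_le (hα : 1 ≤ α) {a b c d : ℝ} (ha : 1 ≤ a) (hab : a ≤ b) (hac : a ≤ c)
    (hd : 0 ≤ d) (hsum : b * c + a + d ≤ a * d + b + c) :
    (b * c) ^ α + a ^ α + d ^ α ≤ (a * d) ^ α + b ^ α + c ^ α := by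
  have hprod := rpow_sub_one_mul_le hα ha hab hac (d := d) (by linarith)
  rw [Real.mul_rpow (by linarith) (by linarith), Real.mul_rpow (by linarith) hd]
  linarith

theorem rpow_six_terms_le_of_pos (hα : 1 ≤ α) {p₁ p₂ p₃ n₁ n₂ n₃ : ℝ} (hn₁ : 0 < n₁)
    (hn₂ : 0 < n₂) (hn₁p₂ : n₁ ≤ p₂) (hn₁p₃ : n₁ ≤ p₃) (hn₂p₁ : n₂ ≤ p₁)
    (hprod : p₁ * p₂ * p₃ = n₁ * n₂ * n₃) (hsum : n₁ + n₂ + n₃ ≤ p₁ + p₂ + p₃) :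
    n₁ ^ α + n₂ ^ α + n₃ ^ α ≤ p₁ ^ α + p₂ ^ α + p₃ ^ α := by
  have hp₁ : 0 < p₁ := hn₂.trans_le hn₂p₁
  have hp₂ : 0 < p₂ := hn₁.trans_le hn₁p₂
  have hp₃ : 0 < p₃ := hn₁.trans_le hn₁p₃
  -- In units of `t`, the six numbers are `a * d, b, c` and `a, d, b * c`.
  set t := n₁ * n₂ / p₁ with ht
  have ht0 : 0 < t := by positivity
  have hn₃ : n₃ = p₂ / t * (p₃ / t) * t := by
    rw [ht]
    field_simp
    linarith
  have hp₂t : p₂ = p₂ / t * t := by field_simp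
  have hp₃t : p₃ = p₃ / t * t := by field_simp
  have hn₁t : n₁ = p₁ / n₂ * t := by rw [ht]; field_simp
  have hn₂t : n₂ = p₁ / n₁ * t := by rw [ht]; field_simp
  have hp₁t : p₁ = p₁ / n₂ * (p₁ / n₁) * t := by rw [ht]; field_simp
  have hrpow {u v : ℝ} (huv : u = v * t) (hv : 0 < v) : u ^ α = v ^ α * t ^ α := by
    rw [huv, Real.mul_rpow hv.le ht0.le]
  have hunits : p₂ / t * (p₃ / t) + p₁ / n₂ + p₁ / n₁
      ≤ p₁ / n₂ * (p₁ / n₁) + p₂ / t + p₃ / t := by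
    refine le_of_mul_le_mul_right ?_ ht0
    linarith
  have hscaled := rpow_three_terms_le hα ((one_le_div hn₂).2 hn₂p₁)
    (by rwa [le_div_iff₀ ht0, ← hn₁t]) (by rwa [le_div_iff₀ ht0, ← hn₁t]) (by positivity) hunits
  rw [hrpow hn₁t (by positivity), hrpow hn₂t (by positivity), hrpow hn₃ (by positivity),
    hrpow hp₁t (by positivity), hrpow hp₂t (by positivity), hrpow hp₃t (by positivity)]
  linarith [mul_le_mul_of_nonneg_right hscaled (Real.rpow_nonneg ht0.le α)]

theorem rpow_six_terms_le (hα : 1 ≤ α) {p₁ p₂ p₃ n₁ n₂ n₃ : ℝ} (hn₁ : 0 ≤ n₁)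
    (hn₁p₂ : n₁ ≤ p₂) (hn₁p₃ : n₁ ≤ p₃) (hp₂n₂ : p₂ ≤ n₂) (hp₂n₃ : p₂ ≤ n₃) (hp₃n₂ : p₃ ≤ n₂)
    (hp₃n₃ : p₃ ≤ n₃) (hn₂p₁ : n₂ ≤ p₁) (hn₃p₁ : n₃ ≤ p₁)
    (hprod : p₁ * p₂ * p₃ = n₁ * n₂ * n₃) (hsum : n₁ + n₂ + n₃ ≤ p₁ + p₂ + p₃) :
    n₁ ^ α + n₂ ^ α + n₃ ^ α ≤ p₁ ^ α + p₂ ^ α + p₃ ^ α := by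
  rcases hn₁.eq_or_lt with rfl | hn₁
  swap
  · exact rpow_six_terms_le_of_pos hα hn₁ (by linarith) hn₁p₂ hn₁p₃ hn₂p₁ hprod hsum
  have hp₁ : 0 ≤ p₁ := by linarith
  have hmono : MonotoneOn (fun x : ℝ => x ^ α) (Set.Ici 0) :=
    Real.monotoneOn_rpow_Ici_of_exponent_nonneg (by linarith)
  have hzero : (0 : ℝ) ^ α = 0 := Real.zero_rpow (by linarith)
  simp only [zero_mul, mul_eq_zero] at hprod
  rcases hprod with (rfl | rfl) | rfl
  · obtain rfl : n₂ = 0 := by linarith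
    obtain rfl : n₃ = 0 := by linarith
    linarith [Real.rpow_nonneg hn₁p₂ α, Real.rpow_nonneg hn₁p₃ α]
  · linarith [convexOn_monotoneOn_add_le_add (convexOn_rpow hα) hmono hp₁ hn₁p₃ hp₃n₂ hp₃n₃
      (by linarith)]
  · linarith [convexOn_monotoneOn_add_le_add (convexOn_rpow hα) hmono hp₁ hn₁p₂ hp₂n₂ hp₂n₃
      (by linarith)]

end PowerInequalities

section BinomialAsymptotics

open Filter Topology

theorem ringChoose_eq_prod_div_factorial (α : ℝ) (n : ℕ) :
    Ring.choose α n = (∏ i ∈ Finset.range n, (α - i)) / n.factorial := by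
  have hpochhammer : (descPochhammer ℤ n).smeval α = ∏ i ∈ Finset.range n, (α - i) := by
    induction n with
    | zero => simp
    | succ n ih =>
      rw [descPochhammer_succ_right, Polynomial.smeval_mul, ih, Finset.prod_range_succ,
        Polynomial.smeval_sub, Polynomial.smeval_X, Polynomial.smeval_natCast]
      simp
  rw [Ring.choose_eq_smul, hpochhammer, smul_eq_mul, div_eq_inv_mul]

theorem isBigO_one_add_rpow_sub_sum (α k : ℝ) (n : ℕ) :
    (fun e : ℝ => (1 + k * e) ^ α - ∑ m ∈ Finset.range n, Ring.choose α m * (k * e) ^ m)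
      =O[𝓝 0] fun e => e ^ n := by
  have htendsto : Tendsto (fun e : ℝ => k * e) (𝓝 0) (𝓝 0) :=
    (continuous_const_mul k).tendsto' 0 0 (mul_zero k)
  have hpartial := (Real.one_add_rpow_hasFPowerSeriesAt_zero (a := α)).isBigO_sub_partialSum_pow n
  have hscale : (fun e : ℝ => ‖k * e‖ ^ n) =O[𝓝 0] fun e => e ^ n :=
    .of_bound (|k| ^ n) (.of_forall fun e => by simp [mul_pow])
  refine ((hpartial.comp_tendsto htendsto).trans hscale).congr_left fun e => ?_
  simp [FormalMultilinearSeries.partialSum, binomialSeries,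
    FormalMultilinearSeries.coeff_ofScalars, mul_comm]

-- The terms of order below `n` in the binomial expansion cancel.
theorem tendsto_sum_one_add_rpow_div_pow {ι : Type*} [Fintype ι] (α : ℝ) (w k : ι → ℝ) (n : ℕ)
    (hmoments : ∀ m < n, ∑ i, w i * k i ^ m = 0) :
    Tendsto (fun e : ℝ => (∑ i, w i * (1 + k i * e) ^ α) / e ^ n) (𝓝[>] 0)
      (𝓝 (Ring.choose α n * ∑ i, w i * k i ^ n)) := by
  have hremainder : Tendsto (fun e => (∑ i, w i * ((1 + k i * e) ^ α -
      ∑ m ∈ Finset.range (n + 1), Ring.choose α m * (k i * e) ^ m)) / e ^ n) (𝓝[>] 0) (𝓝 0) := by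
    refine Asymptotics.IsLittleO.tendsto_div_nhds_zero ?_
    refine (Asymptotics.IsBigO.trans_isLittleO ?_
      (Asymptotics.isLittleO_pow_pow n.lt_succ_self)).mono nhdsWithin_le_nhds
    exact .fun_sum fun i _ => (isBigO_one_add_rpow_sub_sum α (k i) (n + 1)).const_mul_left _
  have hpolynomial (e : ℝ) : ∑ i, w i * ∑ m ∈ Finset.range (n + 1), Ring.choose α m * (k i * e) ^ m
      = Ring.choose α n * (∑ i, w i * k i ^ n) * e ^ n := by
    have hswap : ∑ i, w i * ∑ m ∈ Finset.range (n + 1), Ring.choose α m * (k i * e) ^ m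
        = ∑ m ∈ Finset.range (n + 1), Ring.choose α m * (∑ i, w i * k i ^ m) * e ^ m := by
      simp only [Finset.mul_sum, Finset.sum_mul]
      rw [Finset.sum_comm]
      refine Finset.sum_congr rfl fun m _ => Finset.sum_congr rfl fun i _ => ?_
      ring
    rw [hswap, Finset.sum_range_succ, Finset.sum_eq_zero, zero_add]
    intro m hm
    simp [hmoments m (Finset.mem_range.1 hm)]
  have hlimit := hremainder.add_const (Ring.choose α n * ∑ i, w i * k i ^ n)
  rw [zero_add] at hlimit
  refine hlimit.congr' ?_
  filter_upwards [self_mem_nhdsWithin] with e he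
  simp only [mul_sub, Finset.sum_sub_distrib, hpolynomial]
  rw [sub_div, mul_div_cancel_right₀ _ (pow_ne_zero n (ne_of_gt he)), sub_add_cancel]

theorem eventually_sum_sum_one_add_rpow_neg {α : ℝ} (hα₁ : 1 < α) (hα₂ : α < 2) :
    ∀ᶠ e : ℝ in 𝓝[>] 0, ∑ i : Fin 4, ∑ j : Fin 4,
      ![1, -3, 3, -1] i * ![1, -3, 3, -1] j * (1 + (i : ℝ) * j * e) ^ α < 0 := by
  have hlimit := tendsto_sum_one_add_rpow_div_pow α
    (fun p : Fin 4 × Fin 4 => ![1, -3, 3, -1] p.1 * ![1, -3, 3, -1] p.2)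
    (fun p => (p.1 : ℝ) * p.2) 3 fun m hm => by
      simp only [Fintype.sum_prod_type, Fin.sum_univ_four, Matrix.cons_val]
      interval_cases m <;> norm_num
  have hneg : Ring.choose α 3 * ∑ p : Fin 4 × Fin 4,
      ![1, -3, 3, -1] p.1 * ![1, -3, 3, -1] p.2 * ((p.1 : ℝ) * p.2) ^ 3 < 0 := by
    refine mul_neg_of_neg_of_pos ?_ ?_
    swap
    · simp only [Fintype.sum_prod_type, Fin.sum_univ_four, Matrix.cons_val]
      norm_num
    rw [ringChoose_eq_prod_div_factorial]
    refine div_neg_of_neg_of_pos ?_ (by positivity)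
    simp only [Finset.prod_range_succ, Finset.prod_range_zero, Nat.cast_zero, Nat.cast_one,
      Nat.cast_ofNat, one_mul, sub_zero]
    exact mul_neg_of_pos_of_neg (mul_pos (by linarith) (by linarith)) (by linarith)
  filter_upwards [hlimit.eventually_lt_const hneg, self_mem_nhdsWithin] with e he hpos
  rw [← Fintype.sum_prod_type']
  exact (div_neg_iff.1 he).resolve_left (fun h => h.2.not_gt (pow_pos hpos 3)) |>.1

theorem tendsto_one_add_rpow_sub_one_div (α k : ℝ) :
    Tendsto (fun e : ℝ => ((1 + k * e) ^ α - 1) / e) (𝓝[>] 0) (𝓝 (α * k)) := by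
  have h := tendsto_sum_one_add_rpow_div_pow α ![1, -1] ![k, 0] 1 (by simp)
  simpa [Fin.sum_univ_two, ← sub_eq_add_neg] using h

theorem tendsto_one_add_rpow_second_difference_div_sq (α k : ℝ) :
    Tendsto (fun e : ℝ => ((1 + 2 * k * e) ^ α - 2 * (1 + k * e) ^ α + 1) / e ^ 2) (𝓝[>] 0)
      (𝓝 (α * (α - 1) * k ^ 2)) := by
  have h := tendsto_sum_one_add_rpow_div_pow α ![1, -2, 1] ![2 * k, k, 0] 2 fun m hm => by
    simp only [Fin.sum_univ_three, Matrix.cons_val]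
    interval_cases m
    · norm_num
    · ring
  have hlimit : Ring.choose α 2 * ∑ i, ![1, -2, 1] i * ![2 * k, k, 0] i ^ 2
      = α * (α - 1) * k ^ 2 := by
    rw [ringChoose_eq_prod_div_factorial]
    simp only [Finset.prod_range_succ, Fin.sum_univ_three, Matrix.cons_val]
    norm_num
    ring
  rw [hlimit] at h
  simpa [Fin.sum_univ_three, ← sub_eq_add_neg] using h

/-- The pairwise inner products of the plane points `(0, 0), (1, 0), (2, 0), (3, 1), (4, 2)`, with
rows the first four points and columns all but the second: the non-principal `4 × 4` minor of a
symmetric `5 × 5` matrix whose sign excludes the exponents above `1` in dimension five. -/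
def planeGramMinor : Matrix (Fin 4) (Fin 4) ℝ :=
  !![0, 0, 0, 0; 0, 2, 3, 4; 0, 4, 6, 8; 0, 6, 10, 14]

-- Subtract the first row from the others, and then twice the second row from the third: for
-- `f t = (1 + t * e) ^ α` this makes the third row of order `e ^ 2`.
theorem det_map_planeGramMinor {f : ℝ → ℝ} (hf : f 0 = 1) {e : ℝ} (he : e ≠ 0) :
    (planeGramMinor.map f).det = e ^ 4 * (Matrix.of ![
      fun j => (f (![2, 3, 4] j) - 1) / e,
      fun j => (f (2 * ![2, 3, 4] j) - 2 * f (![2, 3, 4] j) + 1) / e ^ 2,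
      fun j => (f (![6, 10, 14] j) - 1) / e]).det := by
  have hborder : planeGramMinor.map f =
      !![1, 1, 1, 1; 1, f 2, f 3, f 4; 1, f 4, f 6, f 8; 1, f 6, f 10, f 14] := by
    ext i j
    fin_cases i <;> fin_cases j <;> simp [planeGramMinor, hf]
  have hdouble : f (2 * 2) = f 4 ∧ f (2 * 3) = f 6 ∧ f (2 * 4) = f 8 := by norm_num
  rw [hborder, Matrix.det_succ_row_zero]
  simp [Fin.sum_univ_four, Matrix.det_fin_three, Fin.succAbove, hdouble]
  field_simp
  ring

theorem eventually_det_map_one_add_rpow_neg {α : ℝ} (hα : 1 < α) :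
    ∀ᶠ e : ℝ in 𝓝[>] 0, (planeGramMinor.map fun t => (1 + t * e) ^ α).det < 0 := by
  let limit : Matrix (Fin 3) (Fin 3) ℝ := .of ![
    fun j => α * ![2, 3, 4] j, fun j => α * (α - 1) * ![2, 3, 4] j ^ 2,
    fun j => α * ![6, 10, 14] j]
  have hlimit : Tendsto (fun e : ℝ => (Matrix.of ![
      fun j => ((1 + ![2, 3, 4] j * e) ^ α - 1) / e,
      fun j => ((1 + 2 * ![2, 3, 4] j * e) ^ α - 2 * (1 + ![2, 3, 4] j * e) ^ α + 1) / e ^ 2,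
      fun j => ((1 + ![6, 10, 14] j * e) ^ α - 1) / e]).det) (𝓝[>] 0) (𝓝 limit.det) := by
    refine ((continuous_id.matrix_det).tendsto limit).comp
      (tendsto_pi_nhds.2 fun i => tendsto_pi_nhds.2 fun j => ?_)
    fin_cases i
    · exact tendsto_one_add_rpow_sub_one_div α _
    · exact tendsto_one_add_rpow_second_difference_div_sq α _
    · exact tendsto_one_add_rpow_sub_one_div α _
  have hneg : limit.det < 0 := by
    have hdet : limit.det = -4 * (α ^ 3 * (α - 1)) := by
      simp only [limit, Matrix.det_fin_three, Matrix.of_apply, Matrix.cons_val]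
      ring
    have : 0 < α ^ 3 * (α - 1) := mul_pos (by positivity) (by linarith)
    linarith
  filter_upwards [hlimit.eventually_lt_const hneg, self_mem_nhdsWithin] with e he hpos
  rw [det_map_planeGramMinor (by simp) (ne_of_gt hpos)]
  exact mul_neg_of_pos_of_neg (pow_pos hpos 4) he

end BinomialAsymptotics

section CauchyBinet

variable {n : ℕ} {ι R : Type*} [Fintype ι] [CommRing R]

theorem det_mul_eq_sum_pi (A : Matrix (Fin n) ι R) (B : Matrix ι (Fin n) R) :
    (A * B).det = ∑ f : Fin n → ι, (∏ i, A i (f i)) * (B.submatrix f id).det := by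
  classical
  have hrows : A * B = fun i => ∑ z, A i z • B z := by
    ext i j
    simp [Matrix.mul_apply, Finset.sum_apply]
  rw [hrows]
  change Matrix.detRowAlternating.toMultilinearMap _ = _
  rw [MultilinearMap.map_sum]
  exact Finset.sum_congr rfl fun f _ => MultilinearMap.map_smul_univ _ _ _

variable [LinearOrder ι]

theorem sum_image_eq_det_submatrix_mul_det_submatrix (A : Matrix (Fin n) ι R)
    (B : Matrix ι (Fin n) R) {s : Finset ι} (hs : s.card = n) :
    ∑ f : Fin n → ι with Finset.univ.image f = s, (∏ i, A i (f i)) * (B.submatrix f id).det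
      = (A.submatrix id (s.orderEmbOfFin hs)).det * (B.submatrix (s.orderEmbOfFin hs) id).det := by
  rw [← Matrix.det_transpose, Matrix.det_apply', Finset.sum_mul]
  symm
  refine Finset.sum_nbij (fun σ => s.orderEmbOfFin hs ∘ σ) (fun σ _ => ?_)
    (fun σ _ τ _ hστ => ?_) (fun f hf => ?_) fun σ _ => ?_
  · simp [← Finset.coe_inj]
  · exact Equiv.coe_fn_injective ((s.orderEmbOfFin hs).injective.comp_left hστ)
  · have himage : Finset.univ.image f = s := by simpa using hf
    have hmem (i : Fin n) : f i ∈ s := himage ▸ Finset.mem_image_of_mem f (Finset.mem_univ i)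
    have hinjective : Function.Injective f := by
      have hcard : (Finset.univ.image f).card = (Finset.univ : Finset (Fin n)).card := by
        rw [himage, hs, Finset.card_fin]
      simpa [Set.injOn_univ] using Finset.injOn_of_card_image_eq hcard
    let σ (i : Fin n) : Fin n := (s.orderIsoOfFin hs).symm ⟨f i, hmem i⟩
    have hσ : Function.Injective σ := fun i j hij =>
      hinjective (congrArg Subtype.val ((s.orderIsoOfFin hs).symm.injective hij))
    refine ⟨Equiv.ofBijective σ (Finite.injective_iff_bijective.1 hσ), Finset.mem_univ _, ?_⟩
    ext i
    simp [σ, ← Finset.coe_orderIsoOfFin_apply]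
  · have hpermute := Matrix.det_permute σ (B.submatrix (s.orderEmbOfFin hs) id)
    rw [Matrix.submatrix_submatrix, Function.comp_id] at hpermute
    rw [hpermute]
    simp only [Matrix.transpose_apply, Matrix.submatrix_apply, Function.comp_apply, id]
    ring

theorem det_mul_nonneg [LinearOrder R] [IsStrictOrderedRing R] {A : Matrix (Fin n) ι R}
    {B : Matrix ι (Fin n) R} (hA : ∀ c : Fin n → ι, StrictMono c → 0 ≤ (A.submatrix id c).det)
    (hB : ∀ c : Fin n → ι, StrictMono c → 0 ≤ (B.submatrix c id).det) : 0 ≤ (A * B).det := by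
  rw [det_mul_eq_sum_pi, ← Finset.sum_fiberwise Finset.univ fun f => Finset.univ.image f]
  refine Finset.sum_nonneg fun s _ => ?_
  by_cases hs : s.card = n
  · rw [sum_image_eq_det_submatrix_mul_det_submatrix A B hs]
    exact mul_nonneg (hA _ (OrderEmbedding.strictMono _)) (hB _ (OrderEmbedding.strictMono _))
  · refine (Finset.sum_eq_zero fun f hf => ?_).ge
    have hnot_injective : ¬ Function.Injective f := fun hf' => hs <| by
      rw [← (Finset.mem_filter.1 hf).2, Finset.card_image_of_injective _ hf', Finset.card_fin]
    obtain ⟨i, j, hij, hne⟩ := Function.not_injective_iff.1 hnot_injective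
    rw [Matrix.det_zero_of_row_eq hne (by ext k; simp [hij]), mul_zero]

end CauchyBinet

section TotallyNonnegativeKernels

variable {X Y X' Y' : Type*} [LinearOrder X] [LinearOrder Y] [LinearOrder X'] [LinearOrder Y']

theorem le_card_of_strictMono {n : ℕ} [Fintype X] {x : Fin n → X} (hx : StrictMono x) :
    n ≤ Fintype.card X := by
  simpa using Fintype.card_le_of_injective x hx.injective

theorem strictMono_fin_eq_id {n : ℕ} {x : Fin n → Fin n} (hx : StrictMono x) : x = id :=
  (hx.range_inj strictMono_id).1 <| by
    rw [Set.range_id, (Finite.injective_iff_surjective.1 hx.injective).range_eq]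

namespace IsTNKernel

variable {K : X → Y → ℝ}

theorem nonneg (hK : IsTNKernel K) (a : X) (b : Y) : 0 ≤ K a b := by
  simpa using hK 1 (fun _ => a) (fun _ => b) (Subsingleton.strictMono _) (Subsingleton.strictMono _)

theorem mul_le_mul (hK : IsTNKernel K) {a a' : X} {b b' : Y} (ha : a < a') (hb : b < b') :
    K a b' * K a' b ≤ K a b * K a' b' := by
  have h := hK 2 ![a, a'] ![b, b'] (by simpa using ha) (by simpa using hb)
  simpa [Matrix.det_fin_two] using h

theorem of_minors (hone : ∀ a b, 0 ≤ K a b)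
    (htwo : ∀ a a' b b', a < a' → b < b' → K a b' * K a' b ≤ K a b * K a' b')
    (hlarge : ∀ n, 3 ≤ n → ∀ (x : Fin n → X) (y : Fin n → Y), StrictMono x → StrictMono y →
      0 ≤ (Matrix.of fun i j => K (x i) (y j)).det) : IsTNKernel K
  | 0, _, _, _, _ => by simp
  | 1, _, _, _, _ => by simpa using hone _ _
  | 2, x, y, hx, hy => by
    simpa [Matrix.det_fin_two] using htwo _ _ _ _ (hx Fin.zero_lt_one) (hy Fin.zero_lt_one)
  | n + 3, x, y, hx, hy => hlarge (n + 3) le_add_self x y hx hy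

theorem of_minors_of_card_le_two [Fintype Y] (hcard : Fintype.card Y ≤ 2) (hone : ∀ a b, 0 ≤ K a b)
    (htwo : ∀ a a' b b', a < a' → b < b' → K a b' * K a' b ≤ K a b * K a' b') : IsTNKernel K :=
  of_minors hone htwo fun n hn _ _ _ hy => absurd (le_card_of_strictMono hy) (by omega)

theorem of_fin_two {K : Fin 2 → Fin 2 → ℝ} (hone : ∀ a b, 0 ≤ K a b)
    (hdet : K 0 1 * K 1 0 ≤ K 0 0 * K 1 1) : IsTNKernel K := by
  refine of_minors_of_card_le_two (by simp) hone fun a a' b b' ha hb => ?_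
  obtain ⟨rfl, rfl, rfl, rfl⟩ : a = 0 ∧ a' = 1 ∧ b = 0 ∧ b' = 1 := by omega
  exact hdet

theorem comp_strictMono (hK : IsTNKernel K) {f : X' → X} {g : Y' → Y} (hf : StrictMono f)
    (hg : StrictMono g) : IsTNKernel fun a b => K (f a) (g b) :=
  fun n x y hx hy => hK n (f ∘ x) (g ∘ y) (hf.comp hx) (hg.comp hy)

theorem swap (hK : IsTNKernel K) : IsTNKernel fun b a => K a b := fun n y x hy hx => by
  rw [← Matrix.det_transpose]
  exact hK n x y hx hy

theorem const_one : IsTNKernel fun (_ : X) (_ : Y) => (1 : ℝ) :=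
  of_minors (fun _ _ => zero_le_one) (fun _ _ _ _ _ _ => le_rfl) fun n hn _ _ _ _ => by
    have : Nontrivial (Fin n) := Fin.nontrivial_iff_two_le.2 (by omega)
    obtain ⟨i, j, hij⟩ := exists_pair_ne (Fin n)
    exact (Matrix.det_zero_of_row_eq hij rfl).ge

theorem mul_left (hK : IsTNKernel K) {u : X → ℝ} (hu : ∀ a, 0 ≤ u a) :
    IsTNKernel fun a b => u a * K a b := fun n x y hx hy => by
  have h := Matrix.det_mul_column (fun i => u (x i)) (Matrix.of fun i j => K (x i) (y j))
  simp only [Matrix.of_apply] at h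
  rw [h]
  exact mul_nonneg (Finset.prod_nonneg fun i _ => hu _) (hK n x y hx hy)

theorem const {c : ℝ} (hc : 0 ≤ c) : IsTNKernel fun (_ : X) (_ : Y) => c := by
  simpa using (const_one (X := X) (Y := Y)).mul_left fun _ => hc

theorem rankOne {u : X → ℝ} (hu : ∀ a, 0 ≤ u a) : IsTNKernel fun a b => u a * u b := by
  simpa using (const_one.mul_left hu).swap.mul_left hu

theorem sum_mul {Z : Type*} [LinearOrder Z] [Fintype Z] {K : X → Z → ℝ} {L : Z → Y → ℝ}
    (hK : IsTNKernel K) (hL : IsTNKernel L) : IsTNKernel fun a b => ∑ z, K a z * L z b :=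
  fun n x y hx hy => det_mul_nonneg (A := .of fun i z => K (x i) z) (B := .of fun z j => L z (y j))
    (fun c hc => hK n x c hx hc) (fun c hc => hL n c y hc hy)

theorem gram [Fintype Y] (hK : IsTNKernel K) {w : Y → ℝ} (hw : ∀ z, 0 ≤ w z) :
    IsTNKernel fun a b => ∑ z, K a z * (w z * K b z) :=
  hK.sum_mul (hK.swap.mul_left hw)

theorem extend_zero (hK : IsTNKernel K) {f : X → X'} {g : Y → Y'} (hf : StrictMono f)
    (hg : StrictMono g) :
    IsTNKernel fun a b => Function.extend (Prod.map f g) (Function.uncurry K) 0 (a, b) := by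
  intro n x y hx hy
  by_cases hrow : ∀ i, x i ∈ Set.range f
  swap
  · push Not at hrow
    obtain ⟨i, hi⟩ := hrow
    refine (Matrix.det_eq_zero_of_row_eq_zero i fun j => Function.extend_apply' _ _ _ ?_).ge
    rintro ⟨⟨a, b⟩, hab⟩
    exact hi ⟨a, congrArg Prod.fst hab⟩
  by_cases hcolumn : ∀ j, y j ∈ Set.range g
  swap
  · push Not at hcolumn
    obtain ⟨j, hj⟩ := hcolumn
    refine (Matrix.det_eq_zero_of_column_eq_zero j fun i => Function.extend_apply' _ _ _ ?_).ge
    rintro ⟨⟨a, b⟩, hab⟩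
    exact hj ⟨b, congrArg Prod.snd hab⟩
  choose x₀ hx₀ using hrow
  choose y₀ hy₀ using hcolumn
  obtain rfl : f ∘ x₀ = x := funext hx₀
  obtain rfl : g ∘ y₀ = y := funext hy₀
  have hextend (a b) : Function.extend (Prod.map f g) (Function.uncurry K) 0 (f a, g b) = K a b :=
    (hf.injective.prodMap hg.injective).extend_apply (Function.uncurry K) 0 (a, b)
  simp only [Function.comp_apply, hextend]
  exact hK n x₀ y₀ (fun i j hij => hf.lt_iff_lt.1 (hx hij)) fun i j hij => hg.lt_iff_lt.1 (hy hij)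

theorem posSemidef [Finite X] {K : X → X → ℝ} (hK : IsTNKernel K) (hsymm : ∀ a b, K a b = K b a) :
    (Matrix.of K).PosSemidef := by
  refine posSemidef_of_principal_minors_nonneg (Matrix.ext fun a b => hsymm b a) fun s => ?_
  rw [← Matrix.det_submatrix_equiv_self (s.orderIsoOfFin rfl).toEquiv]
  exact hK s.card _ _ (s.orderEmbOfFin rfl).strictMono (s.orderEmbOfFin rfl).strictMono

end IsTNKernel

end TotallyNonnegativeKernels

section EntrywisePowers

variable {X Y : Type*} [LinearOrder X] [LinearOrder Y] {α : ℝ}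

namespace IsTNKernel

theorem det_rpow_nonneg {K : Fin 3 → Fin 3 → ℝ} (hK : IsTNKernel K) (hα : 1 ≤ α) :
    0 ≤ (Matrix.of fun i j => K i j ^ α).det := by
  have hminor {a a' b b' : Fin 3} (c d : Fin 3) (ha : a < a' := by decide)
      (hb : b < b' := by decide) :
      K c d * (K a b' * K a' b) ≤ K c d * (K a b * K a' b') :=
    mul_le_mul_of_nonneg_left (hK.mul_le_mul ha hb) (hK.nonneg c d)
  have hdet := hK 3 id id strictMono_id strictMono_id
  have hrpow (a b c d e f : Fin 3) :
      (K a b * K c d * K e f) ^ α = K a b ^ α * K c d ^ α * K e f ^ α := by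
    rw [Real.mul_rpow (mul_nonneg (hK.nonneg _ _) (hK.nonneg _ _)) (hK.nonneg _ _),
      Real.mul_rpow (hK.nonneg _ _) (hK.nonneg _ _)]
  rw [Matrix.det_fin_three] at hdet ⊢
  simp only [Matrix.of_apply, id] at hdet ⊢
  have hterms := rpow_six_terms_le (p₁ := K 0 0 * K 1 1 * K 2 2) (p₂ := K 0 1 * K 1 2 * K 2 0)
    (p₃ := K 0 2 * K 1 0 * K 2 1) (n₁ := K 0 2 * K 1 1 * K 2 0) (n₂ := K 0 1 * K 1 0 * K 2 2)
    (n₃ := K 0 0 * K 1 2 * K 2 1) hα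
    (mul_nonneg (mul_nonneg (hK.nonneg _ _) (hK.nonneg _ _)) (hK.nonneg _ _))
    (by linear_combination hminor (a := 0) (a' := 1) (b := 1) (b' := 2) 2 0)
    (by linear_combination hminor (a := 1) (a' := 2) (b := 0) (b' := 1) 0 2)
    (by linear_combination hminor (a := 1) (a' := 2) (b := 0) (b' := 2) 0 1)
    (by linear_combination hminor (a := 0) (a' := 2) (b := 0) (b' := 1) 1 2)
    (by linear_combination hminor (a := 0) (a' := 2) (b := 1) (b' := 2) 1 0)
    (by linear_combination hminor (a := 0) (a' := 1) (b := 0) (b' := 2) 2 1)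
    (by linear_combination hminor (a := 0) (a' := 1) (b := 0) (b' := 1) 2 2)
    (by linear_combination hminor (a := 1) (a' := 2) (b := 1) (b' := 2) 0 0)
    (by ring) (by linear_combination hdet)
  simp only [hrpow] at hterms
  linear_combination hterms

theorem rpow_of_minors {K : X → Y → ℝ} (hK : IsTNKernel K) (hα : 1 ≤ α)
    (hlarge : ∀ n, 4 ≤ n → ∀ (x : Fin n → X) (y : Fin n → Y), StrictMono x → StrictMono y →
      0 ≤ (Matrix.of fun i j => K (x i) (y j) ^ α).det) : IsTNKernel fun a b => K a b ^ α := by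
  refine of_minors (fun a b => Real.rpow_nonneg (hK.nonneg a b) α) (fun a a' b b' ha hb => ?_)
    fun n hn x y hx hy => ?_
  · simp only [← Real.mul_rpow (hK.nonneg _ _) (hK.nonneg _ _)]
    exact Real.rpow_le_rpow (mul_nonneg (hK.nonneg _ _) (hK.nonneg _ _)) (hK.mul_le_mul ha hb)
      (zero_le_one.trans hα)
  · obtain rfl | hn := hn.eq_or_lt
    · exact (hK.comp_strictMono hx hy).det_rpow_nonneg hα
    · exact hlarge n hn x y hx hy

theorem rpow_of_card_le_three [Fintype Y] (hcard : Fintype.card Y ≤ 3) {K : X → Y → ℝ}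
    (hK : IsTNKernel K) (hα : 1 ≤ α) : IsTNKernel fun a b => K a b ^ α :=
  hK.rpow_of_minors hα fun n hn _ _ _ hy => absurd (le_card_of_strictMono hy) (by omega)

theorem rpow_of_symm {K : Fin 4 → Fin 4 → ℝ} (hK : IsTNKernel K) (hsymm : ∀ a b, K a b = K b a)
    (hα : 2 ≤ α) : IsTNKernel fun a b => K a b ^ α :=
  hK.rpow_of_minors (one_le_two.trans hα) fun n hn x y hx hy => by
    obtain rfl : n = 4 := le_antisymm (by simpa using le_card_of_strictMono hx) hn
    rw [strictMono_fin_eq_id hx, strictMono_fin_eq_id hy]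
    exact (posSemidef_map_rpow 2 (hK.posSemidef hsymm) hK.nonneg (by exact_mod_cast hα)).det_nonneg

end IsTNKernel

end EntrywisePowers

section Preservers

variable {X Y : Type*} [LinearOrder X] [LinearOrder Y] {F G : ℝ → ℝ} {c : ℝ}

/-- Entrywise preservers of symmetric totally non-negative kernels on `X × X`. The entries of such
kernels are non-negative, so only the restriction of `F` to `[0, ∞)` matters. -/
def PreservesSymmTN (X : Type*) [LinearOrder X] (F : ℝ → ℝ) : Prop :=
  ∀ K : X → X → ℝ, (∀ a b, K a b = K b a) → IsTNKernel K → IsTNKernel fun a b => F (K a b)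

theorem preservesSymmTN_const (hc : 0 ≤ c) : PreservesSymmTN X fun _ => c :=
  fun _ _ _ => IsTNKernel.const hc

theorem preservesSymmTN_id : PreservesSymmTN X fun x => x :=
  fun _ _ hK => hK

namespace PreservesSymmTN

theorem congr (hG : PreservesSymmTN X G) (hFG : ∀ x, 0 ≤ x → F x = G x) : PreservesSymmTN X F :=
  fun K hsymm hK => by simpa only [hFG _ (hK.nonneg _ _)] using hG K hsymm hK

theorem const_mul (hF : PreservesSymmTN X F) (hc : 0 ≤ c) : PreservesSymmTN X fun x => c * F x :=
  fun K hsymm hK => (hF K hsymm hK).mul_left fun _ => hc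

theorem of_eq_const_mul (hF : PreservesSymmTN X F) (hc : 0 < c)
    (hFG : ∀ x, 0 ≤ x → F x = c * G x) : PreservesSymmTN X G :=
  (hF.const_mul (inv_nonneg.2 hc.le)).congr fun x hx => by
    rw [hFG x hx, inv_mul_cancel_left₀ hc.ne']

theorem of_strictMono (hF : PreservesSymmTN X F) {f : Y → X} (hf : StrictMono f) :
    PreservesSymmTN Y F := by
  intro K hsymm hK
  let L (p : X × X) : ℝ := Function.extend (Prod.map f f) (Function.uncurry K) 0 p
  have hinjective : Function.Injective (Prod.map f f) := hf.injective.prodMap hf.injective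
  have hL (a b : Y) : L (f a, f b) = K a b :=
    hinjective.extend_apply (Function.uncurry K) 0 (a, b)
  have hL_symm (a b : X) : L (a, b) = L (b, a) := by
    by_cases h : (∃ i, f i = a) ∧ ∃ j, f j = b
    · obtain ⟨⟨i, rfl⟩, j, rfl⟩ := h
      rw [hL, hL, hsymm]
    · have hzero (p : X × X) (hp : p = (a, b) ∨ p = (b, a)) : L p = 0 :=
        Function.extend_apply' _ _ _ <| by
          rintro ⟨⟨i, j⟩, rfl⟩
          rcases hp with hp | hp <;> simp only [Prod.map_apply, Prod.mk.injEq] at hp <;> tauto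
      rw [hzero _ (.inl rfl), hzero _ (.inr rfl)]
  simpa only [hL] using (hF _ hL_symm (hK.extend_zero hf hf)).comp_strictMono hf hf

theorem nonneg [Nonempty X] (hF : PreservesSymmTN X F) {x : ℝ} (hx : 0 ≤ x) : 0 ≤ F x :=
  Nonempty.elim ‹_› fun a : X =>
    (hF (fun _ _ => x) (fun _ _ => rfl) (IsTNKernel.const hx)).nonneg a a

end PreservesSymmTN

theorem preservesSymmTN_fin_one_iff : PreservesSymmTN (Fin 1) F ↔ ∀ x, 0 ≤ x → 0 ≤ F x :=
  ⟨fun hF _ hx => hF.nonneg hx, fun hF _ _ hK => .of_minors_of_card_le_two (by simp)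
    (fun a b => hF _ (hK.nonneg a b)) fun _ _ _ _ ha => by omega⟩

theorem preservesSymmTN_fin_two_iff_sq_le : PreservesSymmTN (Fin 2) F ↔
    (∀ x, 0 ≤ x → 0 ≤ F x) ∧
      ∀ a b c, 0 ≤ a → 0 ≤ b → 0 ≤ c → b ^ 2 ≤ a * c → F b ^ 2 ≤ F a * F c := by
  constructor
  · refine fun hF => ⟨fun x => hF.nonneg, fun a b c ha hb hc hbac => ?_⟩
    have hK : IsTNKernel fun i j => !![a, b; b, c] i j :=
      .of_fin_two (by simp [Fin.forall_fin_two, ha, hb, hc]) (by simpa [sq] using hbac)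
    have hFK := hF _ (by simp [Fin.forall_fin_two]) hK
    simpa [sq] using hFK.mul_le_mul Fin.zero_lt_one Fin.zero_lt_one
  · rintro ⟨hnonneg, hF⟩ K hsymm hK
    refine .of_fin_two (fun a b => hnonneg _ (hK.nonneg a b)) ?_
    rw [hsymm 1 0, ← sq]
    refine hF _ _ _ (hK.nonneg _ _) (hK.nonneg _ _) (hK.nonneg _ _) ?_
    simpa [sq, hsymm 1 0] using hK.mul_le_mul Fin.zero_lt_one Fin.zero_lt_one

theorem preservesSymmTN_fin_two_iff : PreservesSymmTN (Fin 2) F ↔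
    (∀ x, 0 ≤ x → 0 ≤ F x) ∧ MonotoneOn F (Set.Ici 0) ∧
      ∀ x y, 0 ≤ x → 0 ≤ y → F (√(x * y)) ^ 2 ≤ F x * F y := by
  rw [preservesSymmTN_fin_two_iff_sq_le]
  refine and_congr_right fun hnonneg =>
    ⟨fun hF => ⟨fun x hx y hy hxy => ?_, fun x y hx hy => ?_⟩, ?_⟩
  · refine le_of_sq_le_sq ?_ (hnonneg y hy)
    rw [sq (F y)]
    exact hF y x y hy hx hy (by rw [← sq]; exact pow_le_pow_left₀ hx hxy 2)
  · exact hF x _ y hx (Real.sqrt_nonneg _) hy (Real.sq_sqrt (mul_nonneg hx hy)).le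
  · rintro ⟨hmono, hF⟩ a b c ha hb hc hbac
    exact (pow_le_pow_left₀ (hnonneg b hb)
      (hmono hb (Real.sqrt_nonneg _) (Real.le_sqrt_of_sq_le hbac)) 2).trans (hF a c ha hc)

end Preservers

section CauchyFunctionalEquation

theorem map_eq_mul_map_one_of_map_add {g : ℝ → ℝ} (hadd : ∀ x y, g (x + y) = g x + g y)
    (hmono : Monotone g) (x : ℝ) : g x = x * g 1 := by
  let G : ℝ →+ ℝ := AddMonoidHom.mk' g hadd
  have hcontinuous : Continuous G :=
    MeasureTheory.Measure.AddMonoidHom.continuous_of_measurable G hmono.measurable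
  simpa [G] using map_real_smul G hcontinuous x 1

theorem exists_eq_rpow_of_map_mul {g : ℝ → ℝ} (hpos : ∀ x, 0 < x → 0 < g x)
    (hmono : MonotoneOn g (Set.Ioi 0)) (hmul : ∀ x y, 0 < x → 0 < y → g (x * y) = g x * g y) :
    ∃ α : ℝ, ∀ x, 0 < x → g x = x ^ α := by
  have hexp (t : ℝ) : 0 < g (Real.exp t) := hpos _ (Real.exp_pos t)
  have hadd (s t : ℝ) :
      Real.log (g (Real.exp (s + t))) = Real.log (g (Real.exp s)) + Real.log (g (Real.exp t)) := by
    rw [Real.exp_add, hmul _ _ (Real.exp_pos s) (Real.exp_pos t),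
      Real.log_mul (hexp s).ne' (hexp t).ne']
  have hlog_mono : Monotone fun t => Real.log (g (Real.exp t)) := fun s t hst =>
    Real.log_le_log (hexp s) (hmono (Real.exp_pos s) (Real.exp_pos t) (Real.exp_le_exp.2 hst))
  refine ⟨Real.log (g (Real.exp 1)), fun x hx => ?_⟩
  have hlinear := map_eq_mul_map_one_of_map_add hadd hlog_mono (Real.log x)
  rw [Real.exp_log hx] at hlinear
  rw [Real.rpow_def_of_pos hx, ← hlinear, Real.exp_log (hpos x hx)]

theorem eq_const_or_eq_const_mul_rpow_of_map_mul {F : ℝ → ℝ} (hnonneg : ∀ x, 0 ≤ x → 0 ≤ F x)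
    (hmono : MonotoneOn F (Set.Ici 0))
    (hmul : ∀ x y, 0 ≤ x → 0 ≤ y → F 1 * F (x * y) = F x * F y) :
    (∀ x, 0 ≤ x → F x = F 1) ∨
      0 < F 1 ∧ F 0 = 0 ∧ ∃ α : ℝ, ∀ x, 0 < x → F x = F 1 * x ^ α := by
  obtain hone | hone := (hnonneg 1 zero_le_one).eq_or_lt
  · refine .inl fun x hx => ?_
    have hsq := hmul x x hx hx
    rw [← hone, zero_mul] at hsq
    rw [← hone, mul_self_eq_zero.1 hsq.symm]
  by_cases hzero : F 0 = 0
  swap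
  · refine .inl fun x hx => mul_left_cancel₀ hzero ?_
    have hzero_mul := hmul 0 x le_rfl hx
    rw [zero_mul] at hzero_mul
    rw [← hzero_mul, mul_comm]
  refine .inr ⟨hone, hzero, ?_⟩
  have hpos (x : ℝ) (hx : 0 < x) : 0 < F x := by
    refine (hnonneg x hx.le).lt_of_ne' fun hx₀ => ?_
    have hinv := hmul x x⁻¹ hx.le (inv_nonneg.2 hx.le)
    rw [mul_inv_cancel₀ hx.ne', hx₀, zero_mul] at hinv
    exact hone.ne' (mul_self_eq_zero.1 hinv)
  obtain ⟨α, hα⟩ := exists_eq_rpow_of_map_mul (g := fun x => F x / F 1)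
    (fun x hx => div_pos (hpos x hx) hone)
    (fun x hx y hy hxy => by
      have hle := hmono (Set.Ioi_subset_Ici_self hx) (Set.Ioi_subset_Ici_self hy) hxy
      dsimp only
      gcongr)
    (fun x y hx hy => by
      field_simp
      linear_combination hmul x y hx.le hy.le)
  exact ⟨α, fun x hx => by rw [← hα x hx, mul_div_cancel₀ _ hone.ne']⟩

end CauchyFunctionalEquation

section Necessity

variable {F : ℝ → ℝ} {α e : ℝ}

namespace PreservesSymmTN

theorem map_one_mul_map_mul (hF : PreservesSymmTN (Fin 3) F) {p r : ℝ} (hp : 0 ≤ p) (hr : 0 ≤ r) :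
    F 1 * F (p * r) = F p * F r := by
  have hminors {u : Fin 3 → ℝ} (hu : ∀ i, 0 ≤ u i) :
      IsTNKernel fun i j => F (u i * u j) :=
    hF _ (fun _ _ => mul_comm _ _) (.rankOne hu)
  have hle := (hminors (u := ![p, 1, r]) (by simp [Fin.forall_fin_succ, hp, hr])).mul_le_mul
    (a := 0) (a' := 1) (b := 1) (b' := 2) (by decide) (by decide)
  have hge := (hminors (u := ![1, p, r]) (by simp [Fin.forall_fin_succ, hp, hr])).mul_le_mul
    (a := 0) (a' := 1) (b := 0) (b' := 2) (by decide) (by decide)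
  simp only [Matrix.cons_val, one_mul, mul_one] at hle hge
  linarith

theorem two_mul_map_one_le (hF : PreservesSymmTN (Fin 3) F) (hzero : F 0 = 0) (hone : 0 < F 1) :
    2 * F 1 ≤ F 2 := by
  have hV : IsTNKernel fun i z => (!![1, 0; 1, 1; 0, 1] : Matrix (Fin 3) (Fin 2) ℝ) i z :=
    .of_minors_of_card_le_two (by simp) (by simp [Fin.forall_fin_succ])
      (by simp [Fin.forall_fin_succ])
  have hdet := hF _ (fun i j => Finset.sum_congr rfl fun z _ => by ring)
    (hV.gram fun _ => zero_le_one) 3 id id strictMono_id strictMono_id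
  simp only [Matrix.det_fin_three, Matrix.of_apply, Fin.sum_univ_two, id, Matrix.cons_val,
    one_mul, mul_one, mul_zero, zero_mul, add_zero, zero_add, sub_zero, one_add_one_eq_two,
    hzero] at hdet
  have hfactor : 0 ≤ F 1 ^ 2 * (F 2 - 2 * F 1) := by linear_combination hdet
  exact sub_nonneg.1 (nonneg_of_mul_nonneg_right hfactor (pow_pos hone 2))

end PreservesSymmTN

theorem preservesSymmTN_fin_three_iff : PreservesSymmTN (Fin 3) F ↔
    (∃ c, 0 ≤ c ∧ ∀ x, 0 ≤ x → F x = c) ∨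
      ∃ c, 0 < c ∧ ∃ α : ℝ, 1 ≤ α ∧ ∀ x, 0 ≤ x → F x = c * x ^ α := by
  constructor
  · intro hF
    have hmono : MonotoneOn F (Set.Ici 0) :=
      (preservesSymmTN_fin_two_iff.1 (hF.of_strictMono (Fin.strictMono_castSucc))).2.1
    obtain hconst | ⟨hone, hzero, α, hα⟩ := eq_const_or_eq_const_mul_rpow_of_map_mul
      (fun x => hF.nonneg) hmono fun x y => hF.map_one_mul_map_mul
    · exact .inl ⟨F 1, hF.nonneg zero_le_one, hconst⟩
    have hα_one : 1 ≤ α := by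
      have htwo := hF.two_mul_map_one_le hzero hone
      rw [hα 2 two_pos, mul_comm, mul_le_mul_iff_right₀ hone] at htwo
      exact (Real.rpow_le_rpow_left_iff one_lt_two).1 (by rwa [Real.rpow_one])
    refine .inr ⟨F 1, hone, α, hα_one, fun x hx => ?_⟩
    obtain rfl | hx := hx.eq_or_lt
    · rw [hzero, Real.zero_rpow (zero_lt_one.trans_le hα_one).ne', mul_zero]
    · exact hα x hx
  · rintro (⟨c, hc, hF⟩ | ⟨c, hc, α, hα, hF⟩)
    · exact (preservesSymmTN_const hc).congr hF
    · have hpow : PreservesSymmTN (Fin 3) fun x => x ^ α :=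
        fun K _ hK => hK.rpow_of_card_le_three (by simp) hα
      exact (hpow.const_mul hc.le).congr hF

theorem IsTNKernel.one_add_mul_mul {X : Type*} [LinearOrder X] {u : X → ℝ} (hu : Monotone u)
    (hu₀ : ∀ a, 0 ≤ u a) (he : 0 ≤ e) : IsTNKernel fun a b => 1 + u a * u b * e := by
  have hV : IsTNKernel fun a (z : Fin 2) => ![1, u a] z := by
    refine of_minors_of_card_le_two (by simp) (by simp [Fin.forall_fin_two, hu₀]) ?_
    intro a a' z z' ha hz
    obtain ⟨rfl, rfl⟩ : z = 0 ∧ z' = 1 := by omega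
    simpa using hu ha.le
  have hgram := hV.gram (w := ![1, e]) (by simp [Fin.forall_fin_two, he])
  simp only [Fin.sum_univ_two, Matrix.cons_val, mul_one] at hgram
  convert hgram using 3
  ring

theorem not_preservesSymmTN_fin_four_rpow (hα₁ : 1 < α) (hα₂ : α < 2) :
    ¬ PreservesSymmTN (Fin 4) fun x => x ^ α := by
  intro hF
  obtain ⟨e, hneg, he⟩ :=
    ((eventually_sum_sum_one_add_rpow_neg hα₁ hα₂).and self_mem_nhdsWithin).exists
  have hK := IsTNKernel.one_add_mul_mul (u := fun i : Fin 4 => (i : ℝ))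
    (fun i j hij => Nat.cast_le.2 hij) (fun i => by positivity) (le_of_lt he)
  have hsymm (i j : Fin 4) : 1 + (i : ℝ) * j * e = 1 + (j : ℝ) * i * e := by ring
  have hpsd := (hF _ hsymm hK).posSemidef fun i j => by rw [hsymm]
  have hform := hpsd.dotProduct_mulVec_nonneg ![1, -3, 3, -1]
  refine hneg.not_ge (hform.trans_eq ?_)
  simp only [dotProduct, Matrix.mulVec, Finset.mul_sum, Matrix.of_apply, star_trivial]
  exact Finset.sum_congr rfl fun i _ => Finset.sum_congr rfl fun j _ => by ring

/-- Homogeneous coordinates of the plane points `(0, 0), (1, 0), (2, 0), (3, 1), (4, 2)`; the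
matrix is totally non-negative because they are consecutive points of a convex chain. -/
def convexChain : Matrix (Fin 5) (Fin 3) ℤ :=
  !![1, 0, 0; 1, 1, 0; 1, 2, 0; 1, 3, 1; 1, 4, 2]

theorem isTNKernel_convexChain : IsTNKernel fun a z => (convexChain a z : ℝ) := by
  have hone : ∀ a z, 0 ≤ convexChain a z := by simp [convexChain, Fin.forall_fin_succ]
  have htwo : ∀ a a' z z', a < a' → z < z' →
      convexChain a z' * convexChain a' z ≤ convexChain a z * convexChain a' z' := by decide
  have hthree : ∀ a b c, a < b → b < c → 0 ≤ (convexChain.submatrix ![a, b, c] id).det := by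
    simp only [Matrix.det_fin_three]
    decide
  refine .of_minors (fun a z => mod_cast hone a z)
    (fun a a' z z' ha hz => mod_cast htwo a a' z z' ha hz) fun n hn x y hx hy => ?_
  obtain rfl : n = 3 := le_antisymm (by simpa using le_card_of_strictMono hy) hn
  have hdet := hthree (x 0) (x 1) (x 2) (hx (by decide)) (hx (by decide))
  rw [strictMono_fin_eq_id hy]
  simp only [Matrix.det_fin_three, Matrix.submatrix_apply, Matrix.of_apply, Matrix.cons_val, id]
    at hdet ⊢
  exact_mod_cast hdet

theorem PreservesSymmTN.det_map_planeGramMinor_nonneg (hF : PreservesSymmTN (Fin 5) F)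
    (he : 0 ≤ e) : 0 ≤ (planeGramMinor.map fun t => F (1 + t * e)).det := by
  have hK := isTNKernel_convexChain.gram (w := ![1, e, e]) (by simp [Fin.forall_fin_succ, he])
  have hdet := hF _ (fun a b => Finset.sum_congr rfl fun z _ => by ring) hK 4
    ![0, 1, 2, 3] ![0, 2, 3, 4] (by decide) (by decide)
  convert hdet using 2
  ext i j
  fin_cases i <;> fin_cases j <;>
    simp [planeGramMinor, convexChain, Fin.sum_univ_three] <;> ring_nf

theorem not_preservesSymmTN_fin_five_rpow (hα : 1 < α) :
    ¬ PreservesSymmTN (Fin 5) fun x => x ^ α := by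
  intro hF
  obtain ⟨e, hneg, he⟩ :=
    ((eventually_det_map_one_add_rpow_neg hα).and self_mem_nhdsWithin).exists
  exact hneg.not_ge (hF.det_map_planeGramMinor_nonneg (le_of_lt he))

theorem preservesSymmTN_fin_four_iff : PreservesSymmTN (Fin 4) F ↔
    (∃ c, 0 ≤ c ∧ ∀ x, 0 ≤ x → F x = c) ∨
      ∃ c, 0 < c ∧ ∃ α : ℝ, (α = 1 ∨ 2 ≤ α) ∧ ∀ x, 0 ≤ x → F x = c * x ^ α := by
  constructor
  · intro hF
    refine (preservesSymmTN_fin_three_iff.1 (hF.of_strictMono Fin.strictMono_castSucc)).imp_right ?_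
    rintro ⟨c, hc, α, hα, hFα⟩
    refine ⟨c, hc, α, ?_, hFα⟩
    by_contra! hα'
    exact not_preservesSymmTN_fin_four_rpow (hα.lt_of_ne' hα'.1) hα'.2 (hF.of_eq_const_mul hc hFα)
  · rintro (⟨c, hc, hF⟩ | ⟨c, hc, α, rfl | hα, hF⟩)
    · exact (preservesSymmTN_const hc).congr hF
    · exact (preservesSymmTN_id.const_mul hc.le).congr (by simpa only [Real.rpow_one] using hF)
    · have hpow : PreservesSymmTN (Fin 4) fun x => x ^ α :=
        fun K hsymm hK => hK.rpow_of_symm hsymm hα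
      exact (hpow.const_mul hc.le).congr hF

theorem preservesSymmTN_iff_of_fin_five {X : Type*} [LinearOrder X] {f : Fin 5 → X}
    (hf : StrictMono f) : PreservesSymmTN X F ↔
    (∃ c, 0 ≤ c ∧ ∀ x, 0 ≤ x → F x = c) ∨ ∃ c, 0 < c ∧ ∀ x, 0 ≤ x → F x = c * x := by
  constructor
  · intro hF
    have hFin : PreservesSymmTN (Fin 5) F := hF.of_strictMono hf
    refine (preservesSymmTN_fin_three_iff.1
      (hFin.of_strictMono (Fin.strictMono_castLE (by decide)))).imp_right ?_
    rintro ⟨c, hc, α, hα, hFα⟩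
    obtain rfl | hα := hα.eq_or_lt
    · exact ⟨c, hc, by simpa only [Real.rpow_one] using hFα⟩
    · exact absurd (hFin.of_eq_const_mul hc hFα) (not_preservesSymmTN_fin_five_rpow hα)
  · rintro (⟨c, hc, hF⟩ | ⟨c, hc, hF⟩)
    · exact (preservesSymmTN_const hc).congr hF
    · exact (preservesSymmTN_id.const_mul hc.le).congr hF

end Necessity

section Classification

variable {F : ℝ → ℝ} {d : ℕ}

theorem preservesSymmTN_fin_iff (hd : 0 < d) : PreservesSymmTN (Fin d) F ↔ SymmTNCond F d := by
  have hconst : (∃ c, 0 ≤ c ∧ ∀ x, 0 ≤ x → F x = c) → PreservesSymmTN (Fin d) F :=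
    fun ⟨_, hc, hF⟩ => (preservesSymmTN_const hc).congr hF
  obtain rfl | rfl | rfl | rfl | hd : d = 1 ∨ d = 2 ∨ d = 3 ∨ d = 4 ∨ 5 ≤ d := by omega
  · simpa [SymmTNCond, ← preservesSymmTN_fin_one_iff] using hconst
  · simpa [SymmTNCond, ← preservesSymmTN_fin_two_iff] using hconst
  · simp [SymmTNCond, preservesSymmTN_fin_three_iff]
  · simp [SymmTNCond, preservesSymmTN_fin_four_iff]
  · have hne (n : ℕ) (hn : n < 5 := by decide) : d ≠ n := by omega
    simp [SymmTNCond, hd, hne, preservesSymmTN_iff_of_fin_five (Fin.strictMono_castLE hd)]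

theorem preservesSymmTN_iff_of_natCard {X : Type*} [LinearOrder X] (hd : 0 < d)
    (hX : Nat.card X = d) : PreservesSymmTN X F ↔ SymmTNCond F d := by
  have : Finite X := Nat.finite_of_card_ne_zero (by omega)
  have := Fintype.ofFinite X
  let e : Fin d ≃o X := monoEquivOfFin X (by rw [← hX, Nat.card_eq_fintype_card])
  rw [← preservesSymmTN_fin_iff hd]
  exact ⟨fun hF => hF.of_strictMono e.strictMono, fun hF => hF.of_strictMono e.symm.strictMono⟩

theorem preservesSymmTN_iff_of_infinite {X : Type*} [LinearOrder X] [Infinite X] :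
    PreservesSymmTN X F ↔
      (∃ c, 0 ≤ c ∧ ∀ x, 0 ≤ x → F x = c) ∨ ∃ c, 0 < c ∧ ∀ x, 0 ≤ x → F x = c * x := by
  obtain ⟨s, hs⟩ := Infinite.exists_subset_card_eq X 5
  exact preservesSymmTN_iff_of_fin_five (s.orderEmbOfFin hs).strictMono

theorem preservesSymmTN_fin_iff_isTNMat : PreservesSymmTN (Fin d) F ↔
    ∀ A : Matrix (Fin d) (Fin d) ℝ, A.IsSymm → IsTNMat A → IsTNMat (A.map F) :=
  ⟨fun hF A hsymm hA => hF A (fun i j => hsymm.apply j i) hA,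
    fun hF K hsymm hK => hF (.of K) (Matrix.IsSymm.ext fun i j => hsymm j i) hK⟩

end Classification

theorem stmt_1 (F : ℝ → ℝ) (d : ℕ) (hd : 0 < d) :
    ((∀ A : Matrix (Fin d) (Fin d) ℝ, A.IsSymm → IsTNMat A → IsTNMat (A.map F)) ↔
      SymmTNCond F d) ∧
    (∀ (X : Type) [LinearOrder X], Nat.card X = d →
      ((∀ K : X → X → ℝ, (∀ a b, K a b = K b a) → IsTNKernel K →
          IsTNKernel fun a b => F (K a b)) ↔ SymmTNCond F d)) ∧
    (∀ (X : Type) [LinearOrder X], Infinite X →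
      ((∀ K : X → X → ℝ, (∀ a b, K a b = K b a) → IsTNKernel K →
          IsTNKernel fun a b => F (K a b)) ↔
        ((∃ c : ℝ, 0 ≤ c ∧ ∀ x : ℝ, 0 ≤ x → F x = c) ∨
         (∃ c : ℝ, 0 < c ∧ ∀ x : ℝ, 0 ≤ x → F x = c * x)))) := by
  refine ⟨?_, fun X _ hX => preservesSymmTN_iff_of_natCard hd hX,
    fun X _ _ => preservesSymmTN_iff_of_infinite⟩
  rw [← preservesSymmTN_fin_iff_isTNMat]
  exact preservesSymmTN_fin_iff hd
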